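/- arXiv:2312.05416 — 7 statements merged into one kernel-verified Lean document; each statement's English description precedes it below -/
import Mathlib

section
/- In the free-block placement model, every valid placement on m machines satisfies the inequality m·k ≥ Σ_j d_j · min_{1≤i≤k} ( i / min(f_j(i), d_j) ), where the sum is over all n jobs and the inequality is between real numbers. -/
/-- A placement of `n` jobs on `m` machines, each with `k` processors.
`P t` is the multiset of blocks on machine `t`; a block is a pair
(block size, job). The placement is valid if block sizes lie in `{1,…,k}`,
the block sizes on each machine sum to at most `k`, and every job `j`'s
demand `d j` is satisfied: the sum of `f j i` over all blocks `(i, j)`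
assigned to `j` across all machines is at least `d j`. -/
def ValidPlacement (n k : ℕ) (d : Fin n → ℕ) (f : Fin n → ℕ → ℕ)
    (m : ℕ) (P : Fin m → Multiset (ℕ × Fin n)) : Prop :=
  (∀ t, ∀ b ∈ P t, 1 ≤ b.1 ∧ b.1 ≤ k) ∧
  (∀ t, ((P t).map Prod.fst).sum ≤ k) ∧
  (∀ j : Fin n,
    d j ≤ ∑ t, (((P t).filter (fun b => b.2 = j)).map (fun b => f j b.1)).sum)

/-- Truncating each term of a sum at `c` preserves the bound `c ≤ ∑ g`. -/
theorem Multiset.min_sum_map_le_sum_map_min {α : Type*} (g : α → ℕ) (c : ℕ) (s : Multiset α) :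
    min (s.map g).sum c ≤ (s.map fun a => min (g a) c).sum := by
  induction s using Multiset.induction_on with
  | empty => simp
  | cons a s ih =>
    simp only [Multiset.map_cons, Multiset.sum_cons]
    omega

/-- Splitting a multiset sum along the fibers of `p`. -/
theorem Multiset.sum_fiberwise_sum_map {α ι M : Type*} [Fintype ι] [DecidableEq ι]
    [AddCommMonoid M] (p : α → ι) (g : α → M) (s : Multiset α) :
    ∑ j, ((s.filter fun a => p a = j).map g).sum = (s.map g).sum := by
  induction s using Multiset.induction_on with
  | empty => simp
  | cons a s ih =>
    have h : ∀ j, (((a ::ₘ s).filter fun b => p b = j).map g).sum =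
        (if p a = j then g a else 0) + ((s.filter fun b => p b = j).map g).sum := by
      intro j
      by_cases hj : p a = j <;> simp [hj]
    simp [h, Finset.sum_add_distrib, ih]

/-- If each block `a` has cost `w a ≥ r * min (g a) c` and the values `g a` sum to at least `c`,
then the total cost is at least `c * r`. -/
theorem Multiset.mul_le_sum_map_of_mul_min_le {α : Type*} (g w : α → ℕ) (c : ℕ) {r : ℝ}
    (hr : 0 ≤ r) (s : Multiset α) (hs : c ≤ (s.map g).sum)
    (hw : ∀ a ∈ s, r * (min (g a) c : ℕ) ≤ w a) :
    (c : ℝ) * r ≤ ((s.map w).sum : ℕ) := by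
  have hc : c ≤ (s.map fun a => min (g a) c).sum := by
    simpa [hs] using Multiset.min_sum_map_le_sum_map_min g c s
  calc (c : ℝ) * r ≤ ((s.map fun a => min (g a) c).sum : ℕ) * r := by gcongr
    _ = (s.map fun a => r * (min (g a) c : ℕ)).sum := by
      rw [Multiset.sum_map_mul_left, mul_comm, Nat.cast_multiset_sum, Multiset.map_map]
      rfl
    _ ≤ (s.map fun a => (w a : ℝ)).sum := Multiset.sum_map_le_sum_map _ _ hw
    _ = ((s.map w).sum : ℕ) := by
      rw [Nat.cast_multiset_sum, Multiset.map_map]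
      rfl

/-- In the free-block model, every valid placement on `m` machines satisfies
`m·k ≥ Σ_j d_j · min_{1≤i≤k} ( i / min(f_j(i), d_j) )` over the reals. -/
theorem stmt_2 (n k : ℕ) (hk : 1 ≤ k)
    (d : Fin n → ℕ) (hd : ∀ j, 1 ≤ d j)
    (f : Fin n → ℕ → ℕ) (hf : ∀ j, ∀ i ∈ Finset.Icc 1 k, 1 ≤ f j i)
    (m : ℕ) (P : Fin m → Multiset (ℕ × Fin n))
    (hP : ValidPlacement n k d f m P) :
    ∑ j, (d j : ℝ) *
        (Finset.Icc 1 k).inf' ⟨1, Finset.mem_Icc.mpr ⟨le_refl 1, hk⟩⟩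
          (fun i => (i : ℝ) / (min (f j i) (d j) : ℕ))
      ≤ (m : ℝ) * k := by
  obtain ⟨hsize, hcap, hdem⟩ := hP
  set B : Multiset (ℕ × Fin n) := ∑ t, P t
  have hBsize : ∀ b ∈ B, b.1 ∈ Finset.Icc 1 k := by
    intro b hb
    obtain ⟨t, -, ht⟩ := Multiset.mem_sum.mp hb
    exact Finset.mem_Icc.mpr (hsize t b ht)
  have hBdem : ∀ j, d j ≤ ((B.filter fun b => b.2 = j).map fun b => f j b.1).sum := by
    intro j
    have hsum : ((B.filter fun b => b.2 = j).map fun b => f j b.1).sum =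
        ∑ t, (((P t).filter fun b => b.2 = j).map fun b => f j b.1).sum :=
      map_sum (⟨⟨fun s => ((s.filter fun b => b.2 = j).map fun b => f j b.1).sum, by simp⟩,
        by simp⟩ : Multiset (ℕ × Fin n) →+ ℕ) P Finset.univ
    exact hsum ▸ hdem j
  have hBcap : (B.map Prod.fst).sum ≤ m * k := by
    have hsum : (B.map Prod.fst).sum = ∑ t, ((P t).map Prod.fst).sum :=
      map_sum (⟨⟨fun s => (s.map Prod.fst).sum, by simp⟩, by simp⟩ :
        Multiset (ℕ × Fin n) →+ ℕ) P Finset.univ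
    rw [hsum]
    simpa using Finset.sum_le_sum fun t (_ : t ∈ Finset.univ) => hcap t
  calc _ ≤ ∑ j, ((((B.filter fun b => b.2 = j).map Prod.fst).sum : ℕ) : ℝ) := by
        refine Finset.sum_le_sum fun j _ => ?_
        refine Multiset.mul_le_sum_map_of_mul_min_le (fun b => f j b.1) Prod.fst (d j)
          (Finset.le_inf' _ _ fun i _ => by positivity) _ (hBdem j) fun b hb => ?_
        have hi := hBsize b (Multiset.mem_of_mem_filter hb)
        have hpos : (0 : ℝ) < (min (f j b.1) (d j) : ℕ) :=
          Nat.cast_pos.mpr (lt_min (hf j _ hi) (hd j))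
        exact (le_div_iff₀ hpos).mp (Finset.inf'_le _ hi)
    _ = (((B.map Prod.fst).sum : ℕ) : ℝ) := by
        rw [← Nat.cast_sum, Multiset.sum_fiberwise_sum_map Prod.snd]
    _ ≤ (m : ℝ) * k := by exact_mod_cast hBcap
end

section
/- Let k ≥ 1 be an integer, let f : {1,…,k} → ℕ satisfy f(i) ≥ 1 for all i, and let α ∈ {1,…,k} be a densest block size, i.e., f(α)/α ≥ f(i)/i for all i ∈ {1,…,k}. Let d ≥ 1 be an integer that is a multiple of f(α). Then the minimum of Σ_{i∈S} i, taken over all finite multisets S of elements of {1,…,k} satisfying Σ_{i∈S} f(i) ≥ d, equals α·d/f(α). -/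
/-- If `a * f i ≤ c * i` for every `i ∈ S`, the same bound holds for the sums over `S`. -/
theorem Multiset.mul_sum_map_le_mul_sum (f : ℕ → ℕ) (a c : ℕ) (S : Multiset ℕ)
    (h : ∀ i ∈ S, a * f i ≤ c * i) : a * (S.map f).sum ≤ c * S.sum := by
  rw [← Multiset.sum_map_mul_left, ← Multiset.map_id' S, ← Multiset.sum_map_mul_left]
  simpa using Multiset.sum_map_le_sum_map _ _ h

/-- If `α ∈ {1,…,k}` is a densest block size (`f α / α ≥ f i / i` for all `i`)
and `d ≥ 1` is a multiple of `f α`, then the minimum of `Σ_{i∈S} i` over all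
finite multisets `S` of elements of `{1,…,k}` with `Σ_{i∈S} f i ≥ d`
equals `α · (d / f α)`. -/
theorem stmt_3 (k : ℕ) (hk : 1 ≤ k)
    (f : ℕ → ℕ) (hf : ∀ i ∈ Finset.Icc 1 k, 1 ≤ f i)
    (α : ℕ) (hα : α ∈ Finset.Icc 1 k)
    (hdense : ∀ i ∈ Finset.Icc 1 k, (f i : ℝ) / (i : ℝ) ≤ (f α : ℝ) / (α : ℝ))
    (d : ℕ) (hd : 1 ≤ d) (hdiv : f α ∣ d) :
    IsLeast {s : ℕ | ∃ S : Multiset ℕ,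
        (∀ i ∈ S, i ∈ Finset.Icc 1 k) ∧ d ≤ (S.map f).sum ∧ s = S.sum}
      (α * (d / f α)) := by
  have hαpos : 0 < α := (Finset.mem_Icc.mp hα).1
  have hfα : 0 < f α := hf α hα
  obtain ⟨m, rfl⟩ := hdiv
  rw [Nat.mul_div_cancel_left m hfα]
  constructor
  · refine ⟨Multiset.replicate m α, fun i hi => ?_, ?_, ?_⟩
    · rwa [Multiset.eq_of_mem_replicate hi]
    · simp [mul_comm]
    · simp [mul_comm]
  · rintro s ⟨S, hS, hdS, rfl⟩
    have hcross : ∀ i ∈ S, α * f i ≤ f α * i := fun i hi => by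
      have hipos : 0 < i := (Finset.mem_Icc.mp (hS i hi)).1
      have h := hdense i (hS i hi)
      rw [div_le_div_iff₀ (by exact_mod_cast hipos) (by exact_mod_cast hαpos)] at h
      rw [mul_comm α]
      exact_mod_cast h
    refine Nat.le_of_mul_le_mul_left ?_ hfα
    calc f α * (α * m) = α * (f α * m) := by ring
      _ ≤ α * (S.map f).sum := Nat.mul_le_mul_left α hdS
      _ ≤ f α * S.sum := Multiset.mul_sum_map_le_mul_sum f α (f α) S hcross
end

section
/- Let k ≥ 1 be an integer, and for j = 1,…,n let α_j ∈ {1,…,k} and let d_j, f_j be integers with d_j ≥ f_j ≥ 1. Then the finite multiset consisting, for each j, of ⌈d_j/f_j⌉ copies of α_j can be partitioned into m sub-multisets each of sum at most k, with m ≤ 1 + (4/k)·Σ_{j=1}^n α_j·(d_j/f_j) (an inequality of real numbers). -/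
/-- A multiset of sizes at most `k` splits into one bin `p` and a family `q` of bins, all of
capacity `k`, such that the bins in `q` are at least half full on average. -/
lemma exists_half_full_bins (k : ℕ) (s : Multiset ℕ) (hs : ∀ a ∈ s, a ≤ k) :
    ∃ (p : Multiset ℕ) (q : Multiset (Multiset ℕ)), p + q.sum = s ∧ p.sum ≤ k ∧
      (∀ t ∈ q, t.sum ≤ k) ∧ k * Multiset.card q ≤ 2 * q.sum.sum := by
  induction s using Multiset.induction_on with
  | empty => exact ⟨0, 0, by simp⟩
  | cons a s ih =>
    obtain ⟨p, q, hpq, hp, hq, hcard⟩ := ih fun b hb => hs b (Multiset.mem_cons_of_mem hb)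
    have ha : a ≤ k := hs a (Multiset.mem_cons_self a s)
    by_cases hap : a + p.sum ≤ k
    · exact ⟨a ::ₘ p, q, by rw [Multiset.cons_add, hpq], by simpa using hap, hq, hcard⟩
    by_cases hpa : p.sum ≤ a
    · refine ⟨p, {a} ::ₘ q, ?_, hp, ?_, ?_⟩
      · rw [← hpq, Multiset.sum_cons, ← Multiset.singleton_add]
        abel
      · simpa [ha] using hq
      · simp only [Multiset.card_cons, Multiset.sum_cons, Multiset.sum_add,
          Multiset.sum_singleton]
        linarith
    · refine ⟨{a}, p ::ₘ q, ?_, by simpa using ha, ?_, ?_⟩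
      · rw [← hpq, Multiset.sum_cons, ← Multiset.singleton_add]
      · simpa [hp] using hq
      · simp only [Multiset.card_cons, Multiset.sum_cons, Multiset.sum_add]
        linarith

/-- A multiset of sizes at most `k` can be packed into `m` bins of capacity `k` with
`k * m ≤ 2 * s.sum + k`. -/
lemma exists_bin_packing (k : ℕ) (s : Multiset ℕ) (hs : ∀ a ∈ s, a ≤ k) :
    ∃ parts : Multiset (Multiset ℕ), parts.sum = s ∧ (∀ p ∈ parts, p.sum ≤ k) ∧
      k * Multiset.card parts ≤ 2 * s.sum + k := by
  obtain ⟨p, q, hpq, hp, hq, hcard⟩ := exists_half_full_bins k s hs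
  refine ⟨p ::ₘ q, by simpa using hpq, by simpa [hp] using hq, ?_⟩
  rw [← hpq, Multiset.sum_add, Multiset.card_cons]
  linarith [Nat.zero_le p.sum]

lemma cast_ceilDiv_le_two_mul_div {d f : ℕ} (hf : 1 ≤ f) (hdf : f ≤ d) :
    ((d ⌈/⌉ f : ℕ) : ℝ) ≤ 2 * ((d : ℝ) / f) := by
  have hf' : (0 : ℝ) < f := by exact_mod_cast hf
  have h : (d ⌈/⌉ f) * f ≤ 2 * d := by
    rw [Nat.ceilDiv_eq_add_pred_div]
    exact (Nat.div_mul_le_self _ _).trans (by omega)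
  rw [← mul_div_assoc, le_div_iff₀ hf']
  exact_mod_cast h

/-- The multiset consisting, for each job `j`, of `⌈d j / f j⌉` copies of its
densest block size `α j ∈ {1,…,k}` (with `d j ≥ f j ≥ 1`) can be partitioned
into `m` sub-multisets each of sum at most `k`, with
`m ≤ 1 + (4/k)·Σ_j α_j·(d_j/f_j)` as real numbers. -/
theorem stmt_5 (k : ℕ) (hk : 1 ≤ k) (n : ℕ)
    (α : Fin n → ℕ) (hα : ∀ j, α j ∈ Finset.Icc 1 k)
    (d f : Fin n → ℕ) (hf : ∀ j, 1 ≤ f j) (hdf : ∀ j, f j ≤ d j) :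
    ∃ parts : Multiset (Multiset ℕ),
      parts.sum = ∑ j, Multiset.replicate (d j ⌈/⌉ f j) (α j) ∧
      (∀ p ∈ parts, p.sum ≤ k) ∧
      (Multiset.card parts : ℝ) ≤
        1 + (4 / (k : ℝ)) * ∑ j, (α j : ℝ) * ((d j : ℝ) / (f j : ℝ)) := by
  obtain ⟨parts, hsum, hcap, hcard⟩ := exists_bin_packing k
    (∑ j, Multiset.replicate (d j ⌈/⌉ f j) (α j)) (by
      intro a ha
      obtain ⟨j, -, hj⟩ := Multiset.mem_sum.1 ha
      rw [Multiset.eq_of_mem_replicate hj]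
      exact (Finset.mem_Icc.1 (hα j)).2)
  refine ⟨parts, hsum, hcap, ?_⟩
  have hk' : (0 : ℝ) < k := by exact_mod_cast hk
  have hload : (((∑ j, Multiset.replicate (d j ⌈/⌉ f j) (α j)).sum : ℕ) : ℝ) ≤
      2 * ∑ j, (α j : ℝ) * ((d j : ℝ) / (f j : ℝ)) := by
    rw [← Multiset.coe_sumAddMonoidHom, map_sum, Nat.cast_sum, Finset.mul_sum]
    refine Finset.sum_le_sum fun j _ => ?_
    simp only [Multiset.coe_sumAddMonoidHom, Multiset.sum_replicate, smul_eq_mul, Nat.cast_mul]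
    calc ((d j ⌈/⌉ f j : ℕ) : ℝ) * α j ≤ 2 * ((d j : ℝ) / f j) * α j := by
          gcongr
          exact cast_ceilDiv_le_two_mul_div (hf j) (hdf j)
      _ = 2 * (α j * ((d j : ℝ) / f j)) := by ring
  have hcard' : (k : ℝ) * Multiset.card parts ≤
      2 * ((∑ j, Multiset.replicate (d j ⌈/⌉ f j) (α j)).sum : ℕ) + k := by
    exact_mod_cast hcard
  refine le_of_mul_le_mul_left ?_ hk'
  rw [mul_add, ← mul_assoc, mul_div_cancel₀ _ hk'.ne']
  linarith
end

section
/- In the free-block placement model, if there exists a valid placement of all jobs on m machines, then there exists a valid placement of all jobs on at most 1 + 4m machines in which every job is executed only on blocks of a single size. -/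
/-- A densest size `i` of a multiset of sizes `A` satisfies the demand `d` met by `A` on its own,
with blocks of total size at most twice that of `A`. -/
theorem exists_single_size (A : Multiset ℕ) (d : ℕ) (f : ℕ → ℕ) (hd : 1 ≤ d)
    (hA : ∀ a ∈ A, 1 ≤ a ∧ 1 ≤ f a) (hdA : d ≤ (A.map f).sum) :
    ∃ i c : ℕ, i ∈ A ∧ d ≤ c * f i ∧ c * i ≤ 2 * A.sum := by
  have hne : A.toFinset.Nonempty := by
    rw [Multiset.toFinset_nonempty]
    rintro rfl
    simp at hdA
    omega
  obtain ⟨i, hi, hmax⟩ := A.toFinset.exists_max_image (fun a => (f a : ℚ) / a) hne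
  rw [Multiset.mem_toFinset] at hi
  obtain ⟨hi1, hfi⟩ := hA i hi
  have hdense : ∀ a ∈ A, f a * i ≤ f i * a := by
    intro a ha
    have h := hmax a (Multiset.mem_toFinset.2 ha)
    have ha1 : (0 : ℚ) < a := by exact_mod_cast (hA a ha).1
    have hi0 : (0 : ℚ) < i := by exact_mod_cast hi1
    rw [div_le_div_iff₀ ha1 hi0] at h
    exact_mod_cast h
  have hsum : (A.map f).sum * i ≤ f i * A.sum := by
    rw [← Multiset.sum_map_mul_right, ← Multiset.map_id' A, Multiset.map_map,
      ← Multiset.sum_map_mul_left]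
    exact Multiset.sum_map_le_sum_map _ _ hdense
  have hiA : i ≤ A.sum := Multiset.single_le_sum (fun _ _ => Nat.zero_le _) i hi
  refine ⟨i, (d - 1) / f i + 1, hi, ?_, ?_⟩
  · have h := Nat.lt_div_mul_add (a := d - 1) hfi
    rw [add_mul, one_mul]
    omega
  · have h : f i * ((d - 1) / f i * i) ≤ f i * A.sum :=
      calc f i * ((d - 1) / f i * i) = (d - 1) / f i * f i * i := by ring
        _ ≤ (A.map f).sum * i :=
            Nat.mul_le_mul_right _ ((Nat.div_mul_le_self _ _).trans ((Nat.sub_le _ _).trans hdA))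
        _ ≤ _ := hsum
    have h' := Nat.le_of_mul_le_mul_left h hfi
    rw [add_mul, one_mul]
    omega

/-- Items of weight at most `k` can be packed into bins of capacity `k` of which all but one are
at least half full. -/
theorem exists_half_full_packing {α : Type*} (w : α → ℕ) (k : ℕ) (s : Multiset α)
    (hs : ∀ x ∈ s, w x ≤ k) :
    ∃ (L : List (Multiset α)) (c : Multiset α), L.sum + c = s ∧ (c.map w).sum ≤ k ∧
      ∀ b ∈ L, (b.map w).sum ≤ k ∧ k ≤ 2 * (b.map w).sum := by
  induction s using Multiset.induction_on with
  | empty => exact ⟨[], 0, by simp⟩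
  | cons x s ih =>
    obtain ⟨L, c, hsum, hc, hL⟩ := ih fun y hy => hs y (Multiset.mem_cons_of_mem hy)
    have hx := hs x (Multiset.mem_cons_self x s)
    by_cases hfit : w x + (c.map w).sum ≤ k
    · exact ⟨L, x ::ₘ c, by simp [hsum], by simpa using hfit, hL⟩
    · by_cases hhalf : k ≤ 2 * w x
      · refine ⟨{x} :: L, c, by simp [hsum], hc, ?_⟩
        simpa using ⟨⟨hx, hhalf⟩, hL⟩
      · refine ⟨c :: L, {x}, ?_, by simpa using hx, ?_⟩
        · rw [List.sum_cons, add_comm c, hsum, add_comm, Multiset.singleton_add]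
        · simpa using ⟨⟨hc, by omega⟩, hL⟩

theorem exists_packing {α : Type*} (w : α → ℕ) (k : ℕ) (s : Multiset α)
    (hs : ∀ x ∈ s, w x ≤ k) :
    ∃ (r : ℕ) (Q : Fin (r + 1) → Multiset α), r * k ≤ 2 * (s.map w).sum ∧
      ∑ t, Q t = s ∧ ∀ t, ((Q t).map w).sum ≤ k := by
  obtain ⟨L, c, hsum, hc, hL⟩ := exists_half_full_packing w k s hs
  refine ⟨L.length, Fin.cons c L.get, ?_, ?_, ?_⟩
  · have hload : ∀ M : List (Multiset α), (∀ b ∈ M, k ≤ 2 * (b.map w).sum) →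
        M.length * k ≤ 2 * (M.sum.map w).sum := by
      intro M hM
      induction M with
      | nil => simp
      | cons b M ih =>
        have hb := hM b (by simp)
        have hM' := ih fun b' hb' => hM b' (by simp [hb'])
        simp only [List.length_cons, List.sum_cons, Multiset.map_add, Multiset.sum_add]
        rw [add_mul, one_mul]
        omega
    have h := hload L fun b hb => (hL b hb).2
    rw [← hsum, Multiset.map_add, Multiset.sum_add]
    omega
  · rw [Fin.sum_univ_succ, ← hsum, add_comm]
    simp
  · intro t
    refine Fin.cases ?_ (fun t => ?_) t
    · simpa using hc
    · simpa using (hL _ (L.get_mem t)).1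

theorem sum_fiberwise_map_sum {α ι : Type*} [Fintype ι] [DecidableEq ι] (g : α → ι) (w : α → ℕ)
    (s : Multiset α) :
    ∑ j, ((s.filter fun b => g b = j).map w).sum = (s.map w).sum := by
  induction s using Multiset.induction_on with
  | empty => simp
  | cons x s ih =>
    have h : ∀ j, (((x ::ₘ s).filter fun b => g b = j).map w).sum =
        (if g x = j then w x else 0) + ((s.filter fun b => g b = j).map w).sum := by
      intro j
      by_cases hj : g x = j <;> simp [hj]
    simp [h, Finset.sum_add_distrib, ih]

theorem sum_filter_map_sum {α ι : Type*} [Fintype ι] (p : α → Prop) [DecidablePred p] (w : α → ℕ)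
    (P : ι → Multiset α) :
    ∑ t, (((P t).filter p).map w).sum = (((∑ t, P t).filter p).map w).sum := by
  let φ : Multiset α →+ ℕ :=
    { toFun := fun s => ((s.filter p).map w).sum
      map_zero' := by simp
      map_add' := by simp }
  exact (map_sum φ P Finset.univ).symm

/-- If there is a valid placement of all jobs on `m` machines, then there is a
valid placement on at most `1 + 4m` machines in which every job is executed
only on blocks of a single size. -/
theorem stmt_6 (n k : ℕ) (hk : 1 ≤ k)
    (d : Fin n → ℕ) (hd : ∀ j, 1 ≤ d j)
    (f : Fin n → ℕ → ℕ) (hf : ∀ j, ∀ i ∈ Finset.Icc 1 k, 1 ≤ f j i)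
    (m : ℕ) (P : Fin m → Multiset (ℕ × Fin n))
    (hP : ValidPlacement n k d f m P) :
    ∃ m' : ℕ, m' ≤ 1 + 4 * m ∧
      ∃ Q : Fin m' → Multiset (ℕ × Fin n),
        ValidPlacement n k d f m' Q ∧
        ∀ j : Fin n, ∃ i : ℕ, ∀ t, ∀ b ∈ Q t, b.2 = j → b.1 = i := by
  obtain ⟨hsize, hcap, hdem⟩ := hP
  set T := ∑ t, P t with hT
  have hTsize : ∀ b ∈ T, 1 ≤ b.1 ∧ b.1 ≤ k := by
    intro b hb
    obtain ⟨t, -, ht⟩ := Multiset.mem_sum.1 hb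
    exact hsize t b ht
  have hTcap : (T.map Prod.fst).sum ≤ m * k := by
    have h := sum_filter_map_sum (fun _ => True) Prod.fst P
    simp only [Multiset.filter_true] at h
    rw [hT, ← h]
    simpa using Finset.sum_le_card_nsmul Finset.univ _ k fun t _ => hcap t
  have hjob : ∀ j, ∃ i c : ℕ, i ∈ (T.filter fun b => b.2 = j).map Prod.fst ∧
      d j ≤ c * f j i ∧ c * i ≤ 2 * ((T.filter fun b => b.2 = j).map Prod.fst).sum := by
    intro j
    refine exists_single_size _ _ _ (hd j) ?_ ?_
    · intro a ha
      obtain ⟨b, hb, rfl⟩ := Multiset.mem_map.1 ha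
      have h := hTsize b (Multiset.mem_of_mem_filter hb)
      exact ⟨h.1, hf j _ (Finset.mem_Icc.2 h)⟩
    · rw [Multiset.map_map]
      exact (hdem j).trans_eq (sum_filter_map_sum _ _ P)
  choose i c hi hdc hci using hjob
  have hik : ∀ j, 1 ≤ i j ∧ i j ≤ k := by
    intro j
    obtain ⟨b, hb, hbi⟩ := Multiset.mem_map.1 (hi j)
    exact hbi ▸ hTsize b (Multiset.mem_of_mem_filter hb)
  set s : Multiset (ℕ × Fin n) := ∑ j, Multiset.replicate (c j) (i j, j) with hs
  have hmem : ∀ b ∈ s, b.1 = i b.2 := by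
    intro b hb
    obtain ⟨j, -, hj⟩ := Multiset.mem_sum.1 hb
    rw [Multiset.eq_of_mem_replicate hj]
  have hload : (s.map Prod.fst).sum ≤ 2 * (m * k) := by
    have h := sum_filter_map_sum (fun _ => True) Prod.fst
      fun j => Multiset.replicate (c j) (i j, j)
    simp only [Multiset.filter_true, Multiset.map_replicate, Multiset.sum_replicate,
      smul_eq_mul] at h
    rw [hs, ← h]
    refine (Finset.sum_le_sum fun j _ => hci j).trans ?_
    rw [← Finset.mul_sum, sum_fiberwise_map_sum]
    omega
  obtain ⟨r, Q, hr, hQs, hQk⟩ := exists_packing Prod.fst k s fun b hb => by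
    rw [hmem b hb]
    exact (hik _).2
  have hQmem : ∀ t, ∀ b ∈ Q t, b.1 = i b.2 := fun t b hb =>
    hmem b (hQs ▸ Multiset.mem_sum.2 ⟨t, Finset.mem_univ t, hb⟩)
  refine ⟨r + 1, ?_, Q, ⟨fun t b hb => ?_, hQk, fun j => ?_⟩,
    fun j => ⟨i j, fun t b hb hbj => hbj ▸ hQmem t b hb⟩⟩
  · have h : r * k ≤ 4 * m * k := by linarith
    have := Nat.le_of_mul_le_mul_right h hk
    omega
  · rw [hQmem t b hb]
    exact hik _
  · rw [sum_filter_map_sum, hQs, hs, ← sum_filter_map_sum]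
    refine (hdc j).trans (le_trans ?_ (Finset.single_le_sum (fun _ _ => Nat.zero_le _)
      (Finset.mem_univ j)))
    rw [Multiset.filter_eq_self.2 fun b hb => by rw [Multiset.eq_of_mem_replicate hb]]
    simp
end

section
/- Let k ≥ 4 be an even integer. Consider the free-block instance with machine capacity k and k identical jobs, each with demand d = k²/2 + 2k and demand table f given by f(1) = 1, f(i) = i·k for 2 ≤ i ≤ k/2, and f(i) = k²/2 + k + 1 for k/2 + 1 ≤ i ≤ k. Then: (a) there exists a valid placement of all k jobs on (k/2) + 2 machines, in which each job uses one block of size 2 and one block of size k/2; and (b) every valid placement in which each job is executed only on blocks of size (k/2) + 1 uses at least 2k machines. In particular the ratio between the two machine counts, 2k/((k/2)+2), tends to 4 as k → ∞. -/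
/-- The common demand of the `k` identical jobs: `d = k²/2 + 2k`. -/
def tightDemand (k : ℕ) : ℕ := k * k / 2 + 2 * k

/-- The common demand table of the `k` identical jobs: `f 1 = 1`,
`f i = i·k` for `2 ≤ i ≤ k/2`, and `f i = k²/2 + k + 1` for `k/2 + 1 ≤ i ≤ k`. -/
def tightTable (k : ℕ) : ℕ → ℕ := fun i =>
  if i = 1 then 1 else if i ≤ k / 2 then i * k else k * k / 2 + k + 1

/-- The placement in which job `j` gets one block of size `p` on machine `a j` and one block of
size `q` on machine `b j`. -/
def twoBlockPlacement {n m : ℕ} (p q : ℕ) (a b : Fin n → Fin m) (t : Fin m) :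
    Multiset (ℕ × Fin n) :=
  (Finset.univ.filter (fun j => a j = t)).val.map (fun j => (p, j)) +
    (Finset.univ.filter (fun j => b j = t)).val.map (fun j => (q, j))

lemma sum_filter_map_fiber {n m : ℕ} (p : ℕ) (a : Fin n → Fin m) (j : Fin n) :
    ∑ t, ((Finset.univ.filter (fun i => a i = t)).val.map (fun i => (p, i))).filter
      (fun b => b.2 = j) = {(p, j)} := by
  have fiber (t : Fin m) : ((Finset.univ.filter (fun i => a i = t)).val.map
      (fun i => (p, i))).filter (fun b => b.2 = j) = if a j = t then {(p, j)} else 0 := by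
    rw [Multiset.filter_map]
    have h : (Finset.univ.filter (fun i => a i = t)).val.filter
        ((fun b : ℕ × Fin n => b.2 = j) ∘ fun i => (p, i)) =
        ((Finset.univ.filter (fun i => a i = t)).filter (fun i => i = j)).val := rfl
    rw [h, Finset.filter_eq']
    split_ifs <;> simp_all
  simp only [fiber, Finset.sum_ite_eq, Finset.mem_univ, if_true]

lemma sum_filter_twoBlockPlacement {n m : ℕ} (p q : ℕ) (a b : Fin n → Fin m) (j : Fin n) :
    ∑ t, (twoBlockPlacement p q a b t).filter (fun b => b.2 = j) = {(p, j), (q, j)} := by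
  simp only [twoBlockPlacement, Multiset.filter_add, Finset.sum_add_distrib,
    sum_filter_map_fiber]
  rfl

lemma sum_sizes_twoBlockPlacement {n m : ℕ} (p q : ℕ) (a b : Fin n → Fin m) (t : Fin m) :
    ((twoBlockPlacement p q a b t).map Prod.fst).sum =
      (Finset.univ.filter (fun j => a j = t)).card * p +
        (Finset.univ.filter (fun j => b j = t)).card * q := by
  simp [twoBlockPlacement, Finset.card_def]

lemma card_filter_div_eq_le {n c : ℕ} (hc : 0 < c) (r : ℕ) :
    (Finset.univ.filter (fun j : Fin n => (j : ℕ) / c = r)).card ≤ c := by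
  conv_rhs => rw [← Finset.card_range c]
  refine Finset.card_le_card_of_injOn (fun j => (j : ℕ) % c)
    (fun j _ => by simpa using Nat.mod_lt _ hc) ?_
  intro i hi j hj hij
  simp only [Finset.coe_filter, Finset.mem_univ, true_and, Set.mem_ofPred_eq] at hi hj hij
  rw [Fin.ext_iff, ← Nat.div_add_mod (i : ℕ) c, ← Nat.div_add_mod (j : ℕ) c, hi, hj, hij]

lemma sum_map_sum_filter {n m : ℕ} (P : Fin m → Multiset (ℕ × Fin n)) (j : Fin n)
    (g : ℕ → ℕ) :
    ∑ t, (((P t).filter (fun b => b.2 = j)).map (fun b => g b.1)).sum =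
      ((∑ t, (P t).filter (fun b => b.2 = j)).map (fun b => g b.1)).sum := by
  rw [← Multiset.coe_mapAddMonoidHom, map_sum, ← Multiset.coe_sumAddMonoidHom, map_sum]

/-- The jobs' blocks of size `2` fill two machines, and those of size `h` fill `h` machines. -/
lemma exists_placement_two_half {h : ℕ} (hh : 2 ≤ h) :
    ∃ P : Fin (h + 2) → Multiset (ℕ × Fin (2 * h)),
      ValidPlacement (2 * h) (2 * h) (fun _ => tightDemand (2 * h))
        (fun _ => tightTable (2 * h)) (h + 2) P ∧
      ∀ j, ∑ t, (P t).filter (fun b => b.2 = j) = {(2, j), (h, j)} := by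
  have div_lt (j : Fin (2 * h)) : (j : ℕ) / h < 2 :=
    Nat.div_lt_of_lt_mul (by have := j.2; lia)
  let a : Fin (2 * h) → Fin (h + 2) := fun j => ⟨h + j / h, by have := div_lt j; lia⟩
  let b : Fin (2 * h) → Fin (h + 2) := fun j => ⟨j / 2, by lia⟩
  refine ⟨twoBlockPlacement 2 h a b, ⟨?_, ?_, ?_⟩, sum_filter_twoBlockPlacement 2 h a b⟩
  · intro t x hx
    simp only [twoBlockPlacement, Multiset.mem_add, Multiset.mem_map] at hx
    rcases hx with ⟨j, -, rfl⟩ | ⟨j, -, rfl⟩ <;> dsimp only <;> lia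
  · intro t
    rw [sum_sizes_twoBlockPlacement]
    rcases lt_or_ge (t : ℕ) h with ht | ht
    · have ha : Finset.univ.filter (fun j => a j = t) = ∅ := by
        refine Finset.filter_eq_empty_iff.2 fun j _ hj => ?_
        have := congrArg Fin.val hj
        dsimp only [a] at this
        lia
      have hb := card_filter_div_eq_le (n := 2 * h) two_pos (t : ℕ)
      rw [ha, Finset.card_empty, zero_mul, zero_add]
      simp only [b, Fin.ext_iff]
      gcongr
    · have hb : Finset.univ.filter (fun j => b j = t) = ∅ := by
        refine Finset.filter_eq_empty_iff.2 fun j _ hj => ?_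
        have := congrArg Fin.val hj
        dsimp only [b] at this
        lia
      have ha : (Finset.univ.filter (fun j => a j = t)).card ≤ h := by
        refine le_trans (Finset.card_le_card fun j hj => ?_)
          (card_filter_div_eq_le (n := 2 * h) (by lia : 0 < h) (t - h : ℕ))
        simp only [a, Fin.ext_iff, Finset.mem_filter, Finset.mem_univ, true_and] at hj ⊢
        lia
      rw [hb, Finset.card_empty]
      lia
  · intro j
    rw [sum_map_sum_filter, sum_filter_twoBlockPlacement]
    have half : 2 * h / 2 = h := by lia
    have sq : 2 * h * (2 * h) / 2 = h * (2 * h) := by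
      rw [mul_assoc, Nat.mul_div_cancel_left _ two_pos]
    simp only [tightDemand, tightTable, half, sq, Multiset.insert_eq_cons, Multiset.map_cons,
      Multiset.map_singleton, Multiset.sum_cons, Multiset.sum_singleton]
    rw [if_neg (by lia), if_pos hh, if_neg (by lia), if_pos le_rfl, add_comm]

/-- A machine holds at most one block of more than half its size, and one such block does not
satisfy a job. -/
lemma two_mul_le_of_validPlacement_half_add_one {k m : ℕ} (hk : 2 ≤ k)
    {P : Fin m → Multiset (ℕ × Fin k)}
    (hP : ValidPlacement k k (fun _ => tightDemand k) (fun _ => tightTable k) m P)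
    (hsize : ∀ t, ∀ b ∈ P t, b.1 = k / 2 + 1) : 2 * k ≤ m := by
  obtain ⟨-, hcap, hdem⟩ := hP
  have card_le_one (t : Fin m) : (P t).card ≤ 1 := by
    have h := hcap t
    rw [Multiset.map_congr rfl (hsize t), Multiset.map_const', Multiset.sum_replicate,
      smul_eq_mul] at h
    by_contra! hc
    have := Nat.mul_le_mul_right (k / 2 + 1) hc
    lia
  have two_le (j : Fin k) : 2 ≤ ∑ t, ((P t).filter (fun b => b.2 = j)).card := by
    have h := hdem j
    have block_value (t : Fin m) :
        (((P t).filter (fun b => b.2 = j)).map (fun b => tightTable k b.1)).sum =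
          ((P t).filter (fun b => b.2 = j)).card * (k * k / 2 + k + 1) := by
      have hval : ∀ b ∈ (P t).filter (fun b => b.2 = j),
          tightTable k b.1 = k * k / 2 + k + 1 := by
        intro b hb
        rw [hsize t b (Multiset.mem_of_mem_filter hb), tightTable, if_neg (by lia),
          if_neg (by lia)]
      rw [Multiset.map_congr rfl hval, Multiset.map_const', Multiset.sum_replicate, smul_eq_mul]
    simp only [block_value, ← Finset.sum_mul, tightDemand] at h
    by_contra! hc
    have := Nat.mul_le_mul_right (k * k / 2 + k + 1) (Nat.le_of_lt_succ hc)
    lia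
  have card_eq (t : Fin m) : ∑ j, ((P t).filter (fun b => b.2 = j)).card = (P t).card := by
    simpa [Multiset.count_map, eq_comm] using
      Multiset.sum_count_eq_card (s := Finset.univ) (m := (P t).map Prod.snd) (by simp)
  calc 2 * k = ∑ _j : Fin k, 2 := by simp [mul_comm]
    _ ≤ ∑ j, ∑ t, ((P t).filter (fun b => b.2 = j)).card := Finset.sum_le_sum fun j _ => two_le j
    _ = ∑ t, (P t).card := by rw [Finset.sum_comm]; simp only [card_eq]
    _ ≤ ∑ _t : Fin m, 1 := Finset.sum_le_sum fun t _ => card_le_one t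
    _ = m := by simp

lemma tendsto_two_mul_div_half_add_two :
    Filter.Tendsto (fun k : ℕ => (2 * (k : ℝ)) / ((k : ℝ) / 2 + 2))
      Filter.atTop (nhds 4) := by
  have h := (tendsto_natCast_div_add_atTop (4 : ℝ)).const_mul 4
  rw [mul_one] at h
  refine h.congr fun n => ?_
  field_simp
  ring

/-- For even `k ≥ 4` and the instance with `k` identical jobs of demand
`k²/2 + 2k` and table `tightTable k`:
(a) there is a valid placement on `(k/2) + 2` machines in which each job uses
exactly one block of size `2` and one block of size `k/2`;
(b) every valid placement in which each job is executed only on blocks of size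
`(k/2) + 1` uses at least `2k` machines;
and the ratio `2k / ((k/2) + 2)` tends to `4` as `k → ∞`. -/
theorem stmt_8 (k : ℕ) (hk : 4 ≤ k) (hke : Even k) :
    (∃ P : Fin (k / 2 + 2) → Multiset (ℕ × Fin k),
      ValidPlacement k k (fun _ => tightDemand k) (fun _ => tightTable k)
        (k / 2 + 2) P ∧
      ∀ j : Fin k,
        (∑ t, (P t).filter (fun b => b.2 = j)) =
          ({(2, j), (k / 2, j)} : Multiset (ℕ × Fin k))) ∧
    (∀ (m : ℕ) (P : Fin m → Multiset (ℕ × Fin k)),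
      ValidPlacement k k (fun _ => tightDemand k) (fun _ => tightTable k) m P →
      (∀ t, ∀ b ∈ P t, b.1 = k / 2 + 1) →
      2 * k ≤ m) ∧
    Filter.Tendsto (fun k : ℕ => (2 * (k : ℝ)) / ((k : ℝ) / 2 + 2))
      Filter.atTop (nhds 4) := by
  refine ⟨?_, fun m P => two_mul_le_of_validPlacement_half_add_one (by lia),
    tendsto_two_mul_div_half_add_two⟩
  obtain ⟨h, rfl⟩ := hke.two_dvd
  rw [Nat.mul_div_cancel_left h two_pos]
  exact exists_placement_two_half (by lia)
end

section
/- Let q ≥ 3 be an integer and let a, b, c be integers with 1 ≤ a, b, c ≤ q. Then the nonnegative integer N = (q^{3q} + q^{2q} + q^q) − (q^{2q+c} + q^{q+b} + q^a) is either equal to 0 or is not a power of q, i.e., N ≠ q^e for every natural number e. -/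
/-- Every power of `q ≥ 1` is congruent to `1` modulo `q - 1`. -/
theorem pow_modEq_one_mod_pred {q : ℕ} (hq : 1 ≤ q) (n : ℕ) : q ^ n ≡ 1 [MOD q - 1] := by
  have h : q ≡ 1 [MOD q - 1] := ((Nat.modEq_iff_dvd' hq).2 dvd_rfl).symm
  simpa using h.pow n

/-- For `q ≥ 3` and `1 ≤ a, b, c ≤ q`, the number
`N = (q^{3q} + q^{2q} + q^q) − (q^{2q+c} + q^{q+b} + q^a)` is either `0`
or not a power of `q`. -/
theorem stmt_10 (q : ℕ) (hq : 3 ≤ q) (a b c : ℕ)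
    (ha : 1 ≤ a) (ha' : a ≤ q) (hb : 1 ≤ b) (hb' : b ≤ q)
    (hc : 1 ≤ c) (hc' : c ≤ q) :
    (q ^ (3 * q) + q ^ (2 * q) + q ^ q)
        - (q ^ (2 * q + c) + q ^ (q + b) + q ^ a) = 0 ∨
    ∀ e : ℕ, (q ^ (3 * q) + q ^ (2 * q) + q ^ q)
        - (q ^ (2 * q + c) + q ^ (q + b) + q ^ a) ≠ q ^ e := by
  right
  intro e h
  have hpos : 0 < q ^ e := by positivity
  have hsum : q ^ (3 * q) + q ^ (2 * q) + q ^ q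
      = q ^ (2 * q + c) + q ^ (q + b) + q ^ a + q ^ e := by omega
  have hpow (n : ℕ) : q ^ n ≡ 1 [MOD q - 1] := pow_modEq_one_mod_pred (by omega) n
  have hleft : q ^ (3 * q) + q ^ (2 * q) + q ^ q ≡ 1 + 1 + 1 [MOD q - 1] :=
    ((hpow _).add (hpow _)).add (hpow _)
  have hright : q ^ (2 * q + c) + q ^ (q + b) + q ^ a + q ^ e ≡ 1 + 1 + 1 + 1 [MOD q - 1] :=
    (((hpow _).add (hpow _)).add (hpow _)).add (hpow _)
  rw [hsum] at hleft
  have hdvd : q - 1 ∣ 1 := (Nat.modEq_iff_dvd' (by omega)).1 (hleft.symm.trans hright)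
  have := Nat.le_of_dvd one_pos hdvd
  omega
end

section
/- Consider the free-block placement model where each job j has integer demand d_j ≥ 1 and demand table f_j : {0,1,…,k} → ℕ that is nondecreasing, satisfies f_j(0) = 0 and f_j(1) ≥ 1, and has marginally decreasing gains: f_j(p+1) − f_j(p) ≤ f_j(p) − f_j(p−1) for all 1 ≤ p ≤ k−1. Then the minimum number of machines over all valid placements of the n jobs equals ⌈(Σ_{j=1}^n ⌈d_j / f_j(1)⌉) / k⌉; in particular, assigning each job j exactly ⌈d_j / f_j(1)⌉ blocks of size 1 and packing these unit blocks arbitrarily into machines of capacity k is optimal. -/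
/-- A multiset of at most `m * k` elements splits into `m` parts of at most `k` elements each. -/
theorem Multiset.exists_sum_eq_of_card_le_mul {α : Type*} (k : ℕ) :
    ∀ (m : ℕ) (s : Multiset α), s.card ≤ m * k →
      ∃ P : Fin m → Multiset α, (∀ t, (P t).card ≤ k) ∧ ∑ t, P t = s
  | 0, s, hs => ⟨fun _ => 0, fun t => t.elim0, by
      have : s.card = 0 := by omega
      simp [Multiset.card_eq_zero.mp this]⟩
  | m + 1, s, hs => by
      induction s using Quotient.inductionOn with | _ l =>
      obtain ⟨P, hP, hsum⟩ := Multiset.exists_sum_eq_of_card_le_mul k m (l.drop k : Multiset α) (by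
        rw [Nat.succ_mul] at hs
        simp only [Multiset.quot_mk_to_coe, Multiset.coe_card, List.length_drop] at hs ⊢
        omega)
      refine ⟨Fin.cons (l.take k : Multiset α) P, ?_, ?_⟩
      · simpa [Fin.forall_fin_succ] using hP
      · simp [Fin.sum_univ_succ, hsum]

/-- A table with marginally decreasing gains on `{0,…,k}` lies below its initial slope. -/
theorem le_mul_one_of_marginally_decreasing {k : ℕ} {g : ℕ → ℕ} (hzero : g 0 = 0)
    (hconcave : ∀ p, 1 ≤ p → p + 1 ≤ k → g (p + 1) - g p ≤ g p - g (p - 1))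
    {p : ℕ} (hp : p ≤ k) : g p ≤ g 1 * p := by
  have gain : ∀ p, p + 1 ≤ k → g (p + 1) - g p ≤ g 1 := by
    intro p
    induction p with
    | zero => simp
    | succ p ih =>
      intro h
      exact (hconcave (p + 1) (by omega) h).trans (ih (by omega))
  induction p with
  | zero => simp [hzero]
  | succ p ih =>
    have h₁ := gain p hp
    have h₂ := ih (by omega)
    rw [Nat.mul_succ]
    omega

/-- Summing a weight over the fibres of the second component recovers the total weight. -/
theorem Multiset.sum_sum_filter_snd {α ι : Type*} [Fintype ι] [DecidableEq ι] (w : α → ℕ)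
    (s : Multiset (α × ι)) :
    ∑ j, ((s.filter (fun b => b.2 = j)).map (fun b => w b.1)).sum =
      (s.map (fun b => w b.1)).sum := by
  induction s using Multiset.induction_on with
  | empty => simp
  | cons b s ih =>
    have h : ∀ j, (((b ::ₘ s).filter (fun b => b.2 = j)).map (fun b => w b.1)).sum =
        (if b.2 = j then w b.1 else 0) +
          ((s.filter (fun b => b.2 = j)).map (fun b => w b.1)).sum := by
      intro j
      by_cases hb : b.2 = j <;> simp [hb]
    simp [h, Finset.sum_add_distrib, ih]

/-- For marginally decreasing (concave), nondecreasing demand tables with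
`f j 0 = 0` and `f j 1 ≥ 1`, the minimum number of machines over all valid
placements equals `⌈(Σ_j ⌈d_j / f_j(1)⌉) / k⌉`; in particular giving each job
`j` exactly `⌈d_j / f_j(1)⌉` unit blocks and packing them is optimal. -/
theorem stmt_14 (n k : ℕ) (hk : 1 ≤ k)
    (d : Fin n → ℕ) (hd : ∀ j, 1 ≤ d j)
    (f : Fin n → ℕ → ℕ)
    (hmono : ∀ j, ∀ p q_, p ≤ q_ → q_ ≤ k → f j p ≤ f j q_)
    (hzero : ∀ j, f j 0 = 0)
    (hone : ∀ j, 1 ≤ f j 1)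
    (hconcave : ∀ j, ∀ p, 1 ≤ p → p + 1 ≤ k →
      f j (p + 1) - f j p ≤ f j p - f j (p - 1)) :
    IsLeast {m : ℕ | ∃ P : Fin m → Multiset (ℕ × Fin n),
        ValidPlacement n k d f m P}
      ((∑ j, d j ⌈/⌉ f j 1) ⌈/⌉ k) := by
  constructor
  · obtain ⟨P, hP, hsum⟩ := Multiset.exists_sum_eq_of_card_le_mul k
      ((∑ j, d j ⌈/⌉ f j 1) ⌈/⌉ k) (∑ j, Multiset.replicate (d j ⌈/⌉ f j 1) j) (by
        rw [mul_comm]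
        simpa using le_smul_ceilDiv (a := k) (b := ∑ j, d j ⌈/⌉ f j 1) hk)
    refine ⟨fun t => (P t).map (fun j => (1, j)), ?_, ?_, ?_⟩
    · intro t b hb
      obtain ⟨j, -, rfl⟩ := Multiset.mem_map.mp hb
      exact ⟨le_rfl, hk⟩
    · intro t
      simpa using hP t
    · intro j
      have hcount : ∑ t, (P t).count j = d j ⌈/⌉ f j 1 := by
        rw [← Multiset.count_sum', hsum, Multiset.count_sum']
        simp [Multiset.count_replicate]
      have hblocks : ∀ t, ((((P t).map (fun i => (1, i))).filter (fun b => b.2 = j)).map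
          (fun b => f j b.1)).sum = f j 1 * (P t).count j := by
        intro t
        simp [Multiset.filter_map, Multiset.filter_eq', mul_comm]
      simp only [hblocks, ← Finset.mul_sum, hcount]
      simpa using le_smul_ceilDiv (a := f j 1) (b := d j) (hone j)
  · rintro m ⟨P, hsize, hcap, hdem⟩
    rw [ceilDiv_le_iff_le_smul hk, smul_eq_mul]
    have hjob : ∀ j, d j ⌈/⌉ f j 1 ≤
        ∑ t, (((P t).filter (fun b => b.2 = j)).map (fun b => b.1)).sum := by
      intro j
      rw [ceilDiv_le_iff_le_smul (hone j), smul_eq_mul, Finset.mul_sum]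
      refine (hdem j).trans (Finset.sum_le_sum fun t _ => ?_)
      rw [← Multiset.sum_map_mul_left]
      refine Multiset.sum_map_le_sum_map _ _ fun b hb => ?_
      exact le_mul_one_of_marginally_decreasing (hzero j) (hconcave j)
        (hsize t b (Multiset.mem_of_mem_filter hb)).2
    calc ∑ j, d j ⌈/⌉ f j 1
        ≤ ∑ j, ∑ t, (((P t).filter (fun b => b.2 = j)).map (fun b => b.1)).sum :=
          Finset.sum_le_sum fun j _ => hjob j
      _ = ∑ t, ((P t).map (fun b => b.1)).sum := by
          rw [Finset.sum_comm]
          exact Finset.sum_congr rfl fun t _ => Multiset.sum_sum_filter_snd id (P t)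
      _ ≤ ∑ _t : Fin m, k := Finset.sum_le_sum fun t _ => hcap t
      _ = k * m := by simp [mul_comm]
end
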